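/- Let R be a commutative ring and M an R-module. Then M is flat Mittag-Leffler if and only if M is isomorphic to a direct summand of an admissibly Ind-projective R-module. (Object-level form of Proposition 3.32: the category FM(R) of flat Mittag-Leffler modules is equivalent to the idempotent completion FM(P_f(R)) of Indᵃ(P_f(R)).) -/

import Mathlib

universe u

open TensorProduct DirectSum

/-- The canonical map `M ⊗[R] (∏ i, Q i) →ₗ[R] ∏ i, (M ⊗[R] Q i)`,
determined by `m ⊗ (q_i)_i ↦ (m ⊗ q_i)_i`. -/
noncomputable def tensorPiMap (R : Type u) [CommRing R] (M : Type u) [AddCommGroup M]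
    [Module R M] {ι : Type u} (Q : ι → Type u) [∀ i, AddCommGroup (Q i)]
    [∀ i, Module R (Q i)] :
    (M ⊗[R] (∀ i, Q i)) →ₗ[R] ∀ i, M ⊗[R] Q i :=
  LinearMap.pi fun i => LinearMap.lTensor M (LinearMap.proj i)

/-- An `R`-module `M` is Mittag-Leffler if for every family `(Q i)` of `R`-modules the
canonical map `M ⊗[R] (∏ i, Q i) → ∏ i, (M ⊗[R] Q i)` is injective. -/
def IsMittagLeffler (R : Type u) [CommRing R] (M : Type u) [AddCommGroup M]
    [Module R M] : Prop :=
  ∀ (ι : Type u) (Q : ι → Type u) [∀ i, AddCommGroup (Q i)] [∀ i, Module R (Q i)],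
    Function.Injective (tensorPiMap R M Q)

/-- An `R`-module is flat Mittag-Leffler if it is flat and Mittag-Leffler. -/
def IsFlatMittagLeffler (R : Type u) [CommRing R] (M : Type u) [AddCommGroup M]
    [Module R M] : Prop :=
  Module.Flat R M ∧ IsMittagLeffler R M


/-- A presentation of `M` as an admissible Ind-object of the category of finitely
generated projective `R`-modules: a directed poset `I` and a monotone family of
submodules `P i ⊆ M` with union `M`, each finitely generated projective, such that
each inclusion `P i ⊆ P j` (for `i ≤ j`) admits an `R`-linear retraction. -/
structure AdmissibleIndPresentation (R : Type u) [Ring R] (M : Type u) [AddCommGroup M]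
    [Module R M] : Type (u + 1) where
  I : Type u
  [ord : PartialOrder I]
  directed : IsDirected I (· ≤ ·)
  P : I → Submodule R M
  mono : Monotone P
  covers : ∀ x : M, ∃ i, x ∈ P i
  fg : ∀ i, (P i).FG
  proj : ∀ i, Module.Projective R (P i)
  splits : ∀ i j, (h : i ≤ j) →
    ∃ r : (P j) →ₗ[R] (P i), ∀ v : P i, r (Submodule.inclusion (mono h) v) = v

/-- `M` is admissibly Ind-projective if it admits a presentation as an admissible
Ind-object of finitely generated projective modules. -/
def IsAdmissiblyIndProjective (R : Type u) [Ring R] (M : Type u) [AddCommGroup M]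
    [Module R M] : Prop :=
  Nonempty (AdmissibleIndPresentation R M)

/-! A map from a finitely generated projective module `A` to a flat Mittag-Leffler module `M`
factors as `y ∘ w` through a finite free module in such a way that `w` factors through `v` for
every other such factorization `z ∘ v`: the obstructions `Dual A ⧸ range v.dualMap`, for all
`z ∘ v`, are detected simultaneously by their product. Applying this twice gives `u` with source
`Rᵐ` such that `u` dominates `y` and `r ∘ u ∘ w = w` for some `r`, so that `y`, made injective by
adjoining the error `1 - r ∘ u` as further coordinates, embeds `Rᵐ` as a pure submodule. There is
always room for these coordinates in `M × R^(ℕ)`, whose pure finitely generated projective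
submodules are therefore cofinal among its finitely generated submodules.

Conversely, the members of an admissible presentation are pure submodules, and flatness and the
Mittag-Leffler property pass from pure submodules to their directed unions. -/

section Dominates

variable {R A B C M N : Type*} [Ring R] [AddCommGroup A] [Module R A] [AddCommGroup B] [Module R B]
  [AddCommGroup C] [Module R C] [AddCommGroup M] [Module R M] [AddCommGroup N] [Module R N]

/-- A factorization `x = right ∘ left` of a linear map through a finite free module. -/
structure FreeFactorization (x : A →ₗ[R] M) where
  rank : ℕ
  left : A →ₗ[R] (Fin rank → R)
  right : (Fin rank → R) →ₗ[R] M
  comp_eq : right ∘ₗ left = x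

/-- `w` dominates `x` if `w` factors through every finite free module through which `x` does.
For `A` finite free and `M` flat this agrees with domination in the sense of Raynaud and Gruson,
`ker (x ⊗ Q) ≤ ker (w ⊗ Q)` for all `Q`, but needs no tensor products. -/
def Dominates (w : A →ₗ[R] B) (x : A →ₗ[R] M) : Prop :=
  ∀ p : FreeFactorization x, ∃ r : (Fin p.rank → R) →ₗ[R] B, r ∘ₗ p.left = w

theorem dominates_comp_self (f : M →ₗ[R] N) (x : A →ₗ[R] M) : Dominates (f ∘ₗ x) x :=
  fun p => ⟨f ∘ₗ p.right, by rw [LinearMap.comp_assoc, p.comp_eq]⟩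

namespace Dominates

variable {w : A →ₗ[R] B} {x : A →ₗ[R] M}

theorem comp_left (h : Dominates w x) (f : B →ₗ[R] C) : Dominates (f ∘ₗ w) x := fun p => by
  obtain ⟨r, hr⟩ := h p
  exact ⟨f ∘ₗ r, by rw [LinearMap.comp_assoc, hr]⟩

theorem add {w' : A →ₗ[R] B} (h : Dominates w x) (h' : Dominates w' x) :
    Dominates (w + w') x := fun p => by
  obtain ⟨r, hr⟩ := h p
  obtain ⟨r', hr'⟩ := h' p
  exact ⟨r + r', by rw [LinearMap.add_comp, hr, hr']⟩

theorem pi {ι : Type*} {B : ι → Type*} [∀ i, AddCommGroup (B i)] [∀ i, Module R (B i)]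
    {w : ∀ i, A →ₗ[R] B i} (h : ∀ i, Dominates (w i) x) : Dominates (LinearMap.pi w) x :=
  fun p => by
    choose r hr using fun i => h i p
    exact ⟨LinearMap.pi r, by rw [LinearMap.pi_comp]; simp only [hr]⟩

theorem of_comp (f : M →ₗ[R] N) (h : Dominates w (f ∘ₗ x)) : Dominates w x := fun p =>
  h ⟨p.rank, p.left, f ∘ₗ p.right, by rw [LinearMap.comp_assoc, p.comp_eq]⟩

theorem prodMap_id (h : Dominates w x) :
    Dominates (w.prodMap (.id : C →ₗ[R] C)) (x.prodMap .id) := fun p => by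
  have hp (a : A) (c : C) : p.right (p.left (a, c)) = (x a, c) := LinearMap.congr_fun p.comp_eq _
  obtain ⟨r, hr⟩ := h ⟨p.rank, p.left ∘ₗ .inl R A C, .fst R M C ∘ₗ p.right, by ext a; simp [hp]⟩
  replace hr (a : A) : r (p.left (a, 0)) = w a := LinearMap.congr_fun hr a
  let snd : (Fin p.rank → R) →ₗ[R] C := .snd R M C ∘ₗ p.right
  refine ⟨(r ∘ₗ (.id - p.left ∘ₗ .inr R A C ∘ₗ snd)).prod snd, ?_⟩
  ext x <;> simp [snd, hp, hr]

theorem exists_comp_eq {P : Type*} [AddCommGroup P] [Module R P] [Module.Finite R P]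
    [Module.Projective R P] (h : Dominates w x) (v : A →ₗ[R] P) (z : P →ₗ[R] M)
    (hzv : z ∘ₗ v = x) : ∃ r : P →ₗ[R] B, r ∘ₗ v = w := by
  obtain ⟨k, f, g, -, -, hfg⟩ := Module.Finite.exists_comp_eq_id_of_projective R P
  obtain ⟨r, hr⟩ := h ⟨k, g ∘ₗ v, z ∘ₗ f, by
    rw [LinearMap.comp_assoc, ← LinearMap.comp_assoc v, hfg, LinearMap.id_comp, hzv]⟩
  exact ⟨r ∘ₗ g, hr⟩

theorem ker_le_ker {R A B M : Type*} [CommRing R] [AddCommGroup A] [Module R A]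
    [AddCommGroup B] [Module R B] [AddCommGroup M] [Module R M] [Module.Flat R M] [Module.Free R A]
    [Module.Finite R A] {w : A →ₗ[R] B} {x : A →ₗ[R] M} (h : Dominates w x) :
    LinearMap.ker x ≤ LinearMap.ker w := fun a ha => by
  obtain ⟨k, v, z, hzv, hva⟩ := Module.Flat.exists_factorization_of_apply_eq_zero_of_free ha
  obtain ⟨r, rfl⟩ := h.exists_comp_eq v z hzv.symm
  simp [hva]

end Dominates

end Dominates

section PureFinProjective

variable {R L : Type*} [Ring R] [AddCommGroup L] [Module R L]

/-- A finitely generated projective submodule that splits off every finite free module through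
which its inclusion factors; if `L` is flat, the latter says that the submodule is pure. -/
structure IsPureFinProjective (F : Submodule R L) : Prop where
  fg : F.FG
  projective : Module.Projective R F
  dominates : Dominates LinearMap.id F.subtype

theorem IsPureFinProjective.exists_retraction {F G : Submodule R L} (hF : IsPureFinProjective F)
    (hG : IsPureFinProjective G) (h : F ≤ G) :
    ∃ r : G →ₗ[R] F, ∀ v : F, r (Submodule.inclusion h v) = v := by
  have := hG.projective
  have : Module.Finite R G := .of_fg hG.fg
  obtain ⟨r, hr⟩ := hF.dominates.exists_comp_eq (Submodule.inclusion h) G.subtype rfl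
  exact ⟨r, LinearMap.congr_fun hr⟩

theorem isPureFinProjective_range {A : Type*} [AddCommGroup A] [Module R A] [Module.Finite R A]
    [Module.Projective R A] {f : A →ₗ[R] L} (hf : Function.Injective f)
    (h : Dominates LinearMap.id f) : IsPureFinProjective (LinearMap.range f) := by
  let e : A ≃ₗ[R] LinearMap.range f := .ofInjective f hf
  refine ⟨Module.Finite.iff_fg.mp inferInstance, .of_equiv e, fun p => ?_⟩
  obtain ⟨r, hr⟩ := h ⟨p.rank, p.left ∘ₗ e.toLinearMap, p.right, by
    rw [← LinearMap.comp_assoc, p.comp_eq]; rfl⟩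
  refine ⟨e.toLinearMap ∘ₗ r, LinearMap.ext fun b => ?_⟩
  obtain ⟨a, rfl⟩ := e.surjective b
  exact congrArg e (LinearMap.congr_fun hr a)

theorem isAdmissiblyIndProjective_of_forall_fg_le {R L : Type u} [Ring R] [AddCommGroup L]
    [Module R L] (h : ∀ K : Submodule R L, K.FG → ∃ F, IsPureFinProjective F ∧ K ≤ F) :
    IsAdmissiblyIndProjective R L := by
  refine ⟨{
    I := {F : Submodule R L // IsPureFinProjective F}
    directed := ⟨fun F G => ?_⟩
    P := Subtype.val
    mono := fun _ _ h => h
    covers := fun x => ?_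
    fg := fun F => F.2.fg
    proj := fun F => F.2.projective
    splits := fun F G => F.2.exists_retraction G.2 }⟩
  · obtain ⟨H, hH, hle⟩ := h (F.1 ⊔ G.1) (F.2.fg.sup G.2.fg)
    exact ⟨⟨H, hH⟩, le_sup_left.trans hle, le_sup_right.trans hle⟩
  · obtain ⟨H, hH, hle⟩ := h (Submodule.span R {x}) (Submodule.fg_span_singleton x)
    exact ⟨⟨H, hH⟩, hle (Submodule.mem_span_singleton_self x)⟩

end PureFinProjective

section MittagLeffler

variable {R : Type u} [CommRing R] {M N : Type u} [AddCommGroup M] [Module R M]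
  [AddCommGroup N] [Module R N]

theorem tensorPiMap_rTensor (f : M →ₗ[R] N) {ι : Type u} (Q : ι → Type u)
    [∀ i, AddCommGroup (Q i)] [∀ i, Module R (Q i)] (t : M ⊗[R] (∀ i, Q i)) (i : ι) :
    tensorPiMap R N Q (f.rTensor _ t) i = f.rTensor _ (tensorPiMap R M Q t i) := by
  simp only [tensorPiMap, LinearMap.pi_apply, ← LinearMap.comp_apply,
    LinearMap.lTensor_comp_rTensor, LinearMap.rTensor_comp_lTensor]

theorem IsMittagLeffler.eq_zero_of_rTensor_proj (h : IsMittagLeffler R M) {ι : Type u}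
    {Q : ι → Type u} [∀ i, AddCommGroup (Q i)] [∀ i, Module R (Q i)] {t : (∀ i, Q i) ⊗[R] M}
    (ht : ∀ i, (LinearMap.proj i).rTensor M t = (0 : Q i ⊗[R] M)) : t = 0 := by
  rw [← (TensorProduct.comm R _ _).map_eq_zero_iff]
  refine (injective_iff_map_eq_zero _).mp (h ι Q) _ (funext fun i => ?_)
  rw [tensorPiMap, LinearMap.pi_apply, LinearMap.lTensor_comm, ht, map_zero, Pi.zero_apply]

theorem IsFlatMittagLeffler.mem_range_rTensor_iInf_subtype (h : IsFlatMittagLeffler R M)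
    {ι : Type u} {K : ι → Submodule R N} {t : N ⊗[R] M} (ht : ∀ i, (K i).mkQ.rTensor M t = 0) :
    t ∈ LinearMap.range ((⨅ i, K i).subtype.rTensor M) := by
  have := h.1
  let f : N →ₗ[R] ∀ i, N ⧸ K i := LinearMap.pi fun i => (K i).mkQ
  have ker_f : LinearMap.ker f = ⨅ i, K i := by
    simp only [f, LinearMap.ker_pi, Submodule.ker_mkQ]
  have hft : f.rTensor M t = 0 := h.2.eq_zero_of_rTensor_proj fun i => by
    rw [← LinearMap.rTensor_comp_apply, LinearMap.proj_pi, ht]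
  rw [← ker_f]
  exact (Module.Flat.rTensor_exact M f.exact_subtype_ker_map t).mp hft

theorem IsMittagLeffler.of_retract (h : IsMittagLeffler R N) (f : M →ₗ[R] N) (g : N →ₗ[R] M)
    (hgf : g ∘ₗ f = LinearMap.id) : IsMittagLeffler R M := by
  intro ι Q _ _
  rw [injective_iff_map_eq_zero]
  intro t ht
  have hft : f.rTensor _ t = 0 := by
    refine (injective_iff_map_eq_zero _).mp (h ι Q) _ (funext fun i => ?_)
    rw [tensorPiMap_rTensor, ht, Pi.zero_apply, map_zero, Pi.zero_apply]
  calc t = (g ∘ₗ f).rTensor _ t := by rw [hgf, LinearMap.rTensor_id, LinearMap.id_apply]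
    _ = 0 := by rw [LinearMap.rTensor_comp_apply, hft, map_zero]

theorem isMittagLeffler_of_free [Module.Free R M] : IsMittagLeffler R M := by
  classical
  intro ι Q _ _
  let b := Module.Free.chooseBasis R M
  have coord_apply (t : M ⊗[R] (∀ i, Q i)) (a) (i : ι) :
      TensorProduct.equivFinsuppOfBasisLeft b t a i =
        TensorProduct.equivFinsuppOfBasisLeft b (tensorPiMap R M Q t i) a := by
    induction t with
    | zero => simp
    | tmul m q => simp [tensorPiMap]
    | add t t' ht ht' => simp only [map_add, Finsupp.add_apply, Pi.add_apply, ht, ht']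
  rw [injective_iff_map_eq_zero]
  intro t ht
  rw [← (TensorProduct.equivFinsuppOfBasisLeft b).map_eq_zero_iff]
  ext a i
  simp [coord_apply, ht]

theorem isMittagLeffler_of_projective [Module.Projective R M] : IsMittagLeffler R M := by
  obtain ⟨s, hs⟩ := Module.projective_def'.mp ‹Module.Projective R M›
  exact isMittagLeffler_of_free.of_retract s _ hs

end MittagLeffler

section DominatingFactorization

theorem mem_iInf_range_dualMap_iff_dominates {R A M : Type*} [CommRing R] [AddCommGroup A]
    [Module R A] [AddCommGroup M] [Module R M] {x : A →ₗ[R] M} {φ : Module.Dual R A} :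
    φ ∈ ⨅ p : FreeFactorization x, LinearMap.range p.left.dualMap ↔ Dominates φ x :=
  Submodule.mem_iInf _

theorem rTensor_mkQ_range_dualMap_eq_zero {R A M : Type*} [CommRing R] [AddCommGroup A]
    [Module R A] [AddCommGroup M] [Module R M] [Module.Finite R A] [Module.Projective R A]
    {x : A →ₗ[R] M} {ξ : Module.Dual R A ⊗[R] M} (hξ : dualTensorHom R A M ξ = x)
    (p : FreeFactorization x) :
    (LinearMap.range p.left.dualMap).mkQ.rTensor M ξ = 0 := by
  obtain ⟨ζ, hζ⟩ := dualTensorHom_bijective.surjective p.right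
  have hζξ : p.left.dualMap.rTensor M ζ = ξ := dualTensorHom_bijective.injective <|
    calc dualTensorHom R A M (p.left.dualMap.rTensor M ζ)
        = dualTensorHom R (Fin p.rank → R) M ζ ∘ₗ p.left :=
          LinearMap.congr_fun (dualTensorHom_comp_rTensor_dualMap p.left) ζ
      _ = dualTensorHom R A M ξ := by rw [hζ, p.comp_eq, hξ]
  calc (LinearMap.range p.left.dualMap).mkQ.rTensor M ξ
      = (LinearMap.range p.left.dualMap).mkQ.rTensor M (p.left.dualMap.rTensor M ζ) := by rw [hζξ]
    _ = 0 := by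
      rw [← LinearMap.rTensor_comp_apply, LinearMap.range_mkQ_comp, LinearMap.rTensor_zero,
        LinearMap.zero_apply]

variable {R : Type u} [CommRing R] {A M : Type u} [AddCommGroup A] [Module R A] [AddCommGroup M]
  [Module R M] [Module.Finite R A] [Module.Projective R A]

theorem IsFlatMittagLeffler.exists_dominating_factorization (h : IsFlatMittagLeffler R M)
    (x : A →ₗ[R] M) : ∃ p : FreeFactorization x, Dominates p.left x := by
  obtain ⟨ξ, hξ⟩ := dualTensorHom_bijective.surjective x
  obtain ⟨η, hη⟩ := h.mem_range_rTensor_iInf_subtype (rTensor_mkQ_range_dualMap_eq_zero hξ)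
  obtain ⟨m, φ, y, rfl⟩ := TensorProduct.exists_sum_tmul_eq η
  refine ⟨⟨m, LinearMap.pi fun j => (φ j : Module.Dual R A), Fintype.linearCombination R y, ?_⟩,
    .pi fun j => mem_iInf_range_dualMap_iff_dominates.mp (φ j).2⟩
  refine .trans ?_ hξ
  rw [← hη]
  ext a
  simp [Fintype.linearCombination_apply]

theorem IsFlatMittagLeffler.exists_dominates_prod (h : IsFlatMittagLeffler R M) (x : A →ₗ[R] M) :
    ∃ (p : FreeFactorization x) (t : (Fin p.rank → R) →ₗ[R] (Fin p.rank → R)),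
      t ∘ₗ p.left = 0 ∧ Function.Injective (p.right.prod t) ∧
        Dominates LinearMap.id (p.right.prod t) := by
  obtain ⟨p, hp⟩ := h.exists_dominating_factorization x
  obtain ⟨q, hq⟩ := h.exists_dominating_factorization p.right
  obtain ⟨r, hr⟩ := hp ⟨q.rank, q.left ∘ₗ p.left, q.right, by
    rw [← LinearMap.comp_assoc, q.comp_eq, p.comp_eq]⟩
  let t : (Fin p.rank → R) →ₗ[R] (Fin p.rank → R) := .id - r ∘ₗ q.left
  refine ⟨p, t, by rw [LinearMap.sub_comp, LinearMap.comp_assoc, hr, LinearMap.id_comp, sub_self],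
    ?_, ?_⟩
  · have := h.1
    rw [injective_iff_map_eq_zero]
    intro a ha
    obtain ⟨hpa, hta⟩ := Prod.ext_iff.mp ha
    have hqa : q.left a = 0 := hq.ker_le_ker hpa
    simpa [t, hqa] using hta
  have hq' : Dominates q.left (p.right.prod t) :=
    .of_comp (.fst R M _) (by rwa [LinearMap.fst_prod])
  have ht : Dominates t (p.right.prod t) := by
    simpa only [LinearMap.snd_prod] using dominates_comp_self (.snd R M _) (p.right.prod t)
  simpa only [t, add_sub_cancel] using (hq'.comp_left r).add ht

end DominatingFactorization

section Stabilization

theorem exists_splitMono_prod_finsupp_ge {R X : Type*} [Ring R] [Infinite X] (m : ℕ)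
    (K : Submodule R (X →₀ R)) (hK : K.FG) :
    ∃ (s : Finset X) (e : (Fin m → R) × (s →₀ R) →ₗ[R] (X →₀ R))
      (p : (X →₀ R) →ₗ[R] (Fin m → R) × (s →₀ R)),
      p ∘ₗ e = LinearMap.id ∧ K ≤ LinearMap.range (e ∘ₗ .inr R (Fin m → R) (s →₀ R)) := by
  classical
  obtain ⟨S, rfl⟩ := hK
  let s : Finset X := S.biUnion Finsupp.support
  let g : Fin m ⊕ s → X :=
    Sum.elim (fun i => s.finite_toSet.infinite_compl.natEmbedding _ i) Subtype.val
  have hg : Function.Injective g := Function.Injective.sumElim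
    (Subtype.val_injective.comp ((Function.Embedding.injective _).comp Fin.val_injective))
    Subtype.val_injective fun i j hij =>
      (s.finite_toSet.infinite_compl.natEmbedding _ i).2 (hij ▸ j.2)
  let E : ((Fin m → R) × (s →₀ R)) ≃ₗ[R] (Fin m ⊕ s →₀ R) :=
    ((Finsupp.linearEquivFunOnFinite R R (Fin m)).symm.prodCongr (.refl R (s →₀ R))) ≪≫ₗ
      (Finsupp.sumFinsuppLEquivProdFinsupp R).symm
  have mapDomain_E_inr (b : s →₀ R) :
      Finsupp.mapDomain g (E (0, b)) = Finsupp.mapDomain Subtype.val b := by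
    have : Finsupp.lmapDomain R R g ∘ₗ E.toLinearMap ∘ₗ .inr R _ _ =
        Finsupp.lmapDomain R R Subtype.val := by
      ext i x
      simp [E, g]
    exact LinearMap.congr_fun this b
  refine ⟨s, Finsupp.lmapDomain R R g ∘ₗ E.toLinearMap,
    E.symm.toLinearMap ∘ₗ Finsupp.lcomapDomain g hg, LinearMap.ext fun b => ?_,
    Submodule.span_le.mpr fun a ha => ?_⟩
  · exact (congrArg E.symm (Finsupp.leftInverse_lcomapDomain_mapDomain g hg (E b))).trans
      (E.symm_apply_apply b)
  · have hs : (a.support : Set X) ⊆ Set.range (Subtype.val : s → X) := fun i hi =>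
      ⟨⟨i, Finset.mem_biUnion.mpr ⟨a, ha, hi⟩⟩, rfl⟩
    exact ⟨a.comapDomain Subtype.val Subtype.val_injective.injOn, (mapDomain_E_inr _).trans
      (Finsupp.mapDomain_comapDomain _ Subtype.val_injective _ hs)⟩

variable {R : Type u} [CommRing R] {M : Type u} [AddCommGroup M] [Module R M]

theorem IsFlatMittagLeffler.exists_isPureFinProjective_ge (h : IsFlatMittagLeffler R M)
    {X : Type*} [Infinite X] (K : Submodule R (M × (X →₀ R))) (hK : K.FG) :
    ∃ F : Submodule R (M × (X →₀ R)), IsPureFinProjective F ∧ K ≤ F := by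
  have := h.1
  obtain ⟨n, G, rfl⟩ := (Submodule.fg_iff_exists_fin_linearMap R _).mp hK
  obtain ⟨p, t, htp, hinj, hpt⟩ := h.exists_dominates_prod (.fst R M (X →₀ R) ∘ₗ G)
  obtain ⟨s, e, q, hqe, hGe⟩ := exists_splitMono_prod_finsupp_ge p.rank
    (LinearMap.range (.snd R M (X →₀ R) ∘ₗ G)) (Module.Finite.iff_fg.mp inferInstance)
  let f : (Fin p.rank → R) × (s →₀ R) →ₗ[R] M × (X →₀ R) :=
    (p.right ∘ₗ .fst R _ _).prod (e ∘ₗ t.prodMap .id)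
  let unpack : M × (X →₀ R) →ₗ[R] (M × (Fin p.rank → R)) × (s →₀ R) :=
    ((LinearMap.fst R _ _).prod (.fst R _ _ ∘ₗ q ∘ₗ .snd R _ _)).prod
      (.snd R _ _ ∘ₗ q ∘ₗ .snd R _ _)
  have unpack_comp : unpack ∘ₗ f = (p.right.prod t).prodMap .id := by
    replace hqe (b) : q (e b) = b := LinearMap.congr_fun hqe b
    apply LinearMap.ext
    simp [unpack, f, hqe]
  refine ⟨LinearMap.range f, isPureFinProjective_range ?_ (.of_comp unpack ?_), ?_⟩
  · refine Function.Injective.of_comp (f := unpack) ?_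
    rw [← LinearMap.coe_comp, unpack_comp]
    exact hinj.prodMap Function.injective_id
  · rw [unpack_comp, ← LinearMap.prodMap_id]
    exact hpt.prodMap_id
  · rintro _ ⟨a, rfl⟩
    obtain ⟨b, hb⟩ := hGe ⟨a, rfl⟩
    replace htp : t (p.left a) = 0 := LinearMap.congr_fun htp a
    exact ⟨(p.left a, b), Prod.ext (LinearMap.congr_fun p.comp_eq a) (by simpa [f, htp] using hb)⟩

theorem IsFlatMittagLeffler.isAdmissiblyIndProjective_prod_finsupp (h : IsFlatMittagLeffler R M) :
    IsAdmissiblyIndProjective R (M × (ℕ →₀ R)) :=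
  isAdmissiblyIndProjective_of_forall_fg_le h.exists_isPureFinProjective_ge

end Stabilization

namespace AdmissibleIndPresentation

theorem exists_le {R L : Type u} [Ring R] [AddCommGroup L] [Module R L]
    (A : AdmissibleIndPresentation R L) (S : Submodule R L) (hS : S.FG) : ∃ i, S ≤ A.P i := by
  let _ := A.ord
  have := A.directed
  induction S, hS using Submodule.fg_induction with
  | singleton x => simpa only [Submodule.span_singleton_le_iff_mem] using A.covers x
  | sup S T _ _ hS hT =>
    obtain ⟨i, hi⟩ := hS
    obtain ⟨j, hj⟩ := hT
    obtain ⟨k, hik, hjk⟩ := exists_ge_ge i j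
    exact ⟨k, sup_le (hi.trans (A.mono hik)) (hj.trans (A.mono hjk))⟩

variable {R L : Type u} [CommRing R] [AddCommGroup L] [Module R L]

theorem exists_rTensor_subtype_eq (A : AdmissibleIndPresentation R L) {Q : Type*}
    [AddCommGroup Q] [Module R Q] (t : L ⊗[R] Q) :
    ∃ i, ∃ s : A.P i ⊗[R] Q, (A.P i).subtype.rTensor Q s = t := by
  obtain ⟨S, hS, hle⟩ := TensorProduct.exists_finite_submodule_left_of_setFinite {t}
    (Set.finite_singleton t)
  obtain ⟨s, hs⟩ := hle rfl
  obtain ⟨i, hi⟩ := A.exists_le S (Module.Finite.iff_fg.mp hS)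
  exact ⟨i, (Submodule.inclusion hi).rTensor Q s, by
    rw [← LinearMap.rTensor_comp_apply, Submodule.subtype_comp_inclusion, hs]⟩

theorem rTensor_subtype_injective (A : AdmissibleIndPresentation R L) (i : A.I) (Q : Type*)
    [AddCommGroup Q] [Module R Q] : Function.Injective ((A.P i).subtype.rTensor Q) := by
  let _ := A.ord
  have := A.directed
  rw [injective_iff_map_eq_zero]
  intro t ht
  obtain ⟨S, hle, hS, htS⟩ := TensorProduct.eq_zero_of_fg_of_subtype_eq_zero (A.fg i) ht
  obtain ⟨j, hj⟩ := A.exists_le S hS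
  obtain ⟨k, hik, hjk⟩ := exists_ge_ge i j
  obtain ⟨r, hr⟩ := A.splits i k hik
  have hrS : (r ∘ₗ Submodule.inclusion (hj.trans (A.mono hjk))) ∘ₗ Submodule.inclusion hle = .id :=
    LinearMap.ext hr
  rw [← LinearMap.id_apply (R := R) t, ← LinearMap.rTensor_id, ← hrS,
    LinearMap.rTensor_comp_apply, htS, map_zero]

theorem flat (A : AdmissibleIndPresentation R L) : Module.Flat R L := by
  rw [Module.Flat.iff_lTensor_preserves_injective_linearMap]
  intro Q Q' _ _ _ _ f hf
  rw [injective_iff_map_eq_zero]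
  intro t ht
  obtain ⟨i, s, rfl⟩ := A.exists_rTensor_subtype_eq t
  have := A.proj i
  have hs : f.lTensor (A.P i) s = 0 := by
    refine (injective_iff_map_eq_zero _).mp (A.rTensor_subtype_injective i Q') _ ?_
    rwa [← LinearMap.comp_apply, LinearMap.rTensor_comp_lTensor, ← LinearMap.lTensor_comp_rTensor]
  have lTensor_injective : Function.Injective (f.lTensor (A.P i)) :=
    Module.Flat.lTensor_preserves_injective_linearMap f hf
  rw [(injective_iff_map_eq_zero _).mp lTensor_injective s hs, map_zero]

theorem isMittagLeffler (A : AdmissibleIndPresentation R L) : IsMittagLeffler R L := by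
  intro ι Q _ _
  rw [injective_iff_map_eq_zero]
  intro t ht
  obtain ⟨i, s, rfl⟩ := A.exists_rTensor_subtype_eq t
  have := A.proj i
  have hs : tensorPiMap R (A.P i) Q s = 0 := funext fun j =>
    (injective_iff_map_eq_zero _).mp (A.rTensor_subtype_injective i (Q j)) _ (by
      rw [← tensorPiMap_rTensor, ht, Pi.zero_apply])
  rw [(injective_iff_map_eq_zero _).mp (isMittagLeffler_of_projective ι Q) s hs, map_zero]

end AdmissibleIndPresentation

/-- **Proposition 3.32 (object level)**: an `R`-module `M` is flat Mittag-Leffler if and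
only if it is isomorphic to a direct summand of an admissibly Ind-projective module. -/
theorem isFlatMittagLeffler_iff_summand_of_indProjective
    (R : Type u) [CommRing R] (M : Type u) [AddCommGroup M] [Module R M] :
    IsFlatMittagLeffler R M ↔
      ∃ L N : ModuleCat.{u} R,
        IsAdmissiblyIndProjective R L ∧ Nonempty ((L : Type u) ≃ₗ[R] M × (N : Type u)) := by
  constructor
  · intro h
    exact ⟨.of R (M × (ℕ →₀ R)), .of R (ℕ →₀ R), h.isAdmissiblyIndProjective_prod_finsupp,
      ⟨.refl R _⟩⟩
  · rintro ⟨L, N, ⟨A⟩, ⟨e⟩⟩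
    have := A.flat
    have retract : (.fst R M N ∘ₗ e.toLinearMap) ∘ₗ (e.symm.toLinearMap ∘ₗ .inl R M N) = .id := by
      ext x
      simp
    exact ⟨.of_retract _ _ retract, A.isMittagLeffler.of_retract _ _ retract⟩
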